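/- If A = KQ/J² is a radical square zero algebra, then the trivial extension A ⋉ D(A) is a symmetric special multiserial algebra whose radical cube is zero, and A is a quotient of A ⋉ D(A). -/

import Mathlib

/-!  A model of the path algebra `KQ` of a finite quiver `Q` (vertex set `V`,
arrow set `A`, source and target maps `s t : A → V`), as the quotient of the
free algebra on `V ⊕ A` by the usual path-algebra relations.  -/

open FreeAlgebra

inductive PathRel (K V A : Type) [Field K] [Fintype V] [DecidableEq V] (s t : A → V) :
    FreeAlgebra K (V ⊕ A) → FreeAlgebra K (V ⊕ A) → Prop
  | vtxMul : ∀ v w : V,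
      PathRel K V A s t (ι K (Sum.inl v) * ι K (Sum.inl w))
        (if v = w then ι K (Sum.inl v) else 0)
  | unit : PathRel K V A s t (∑ v : V, ι K (Sum.inl v)) 1
  | src : ∀ a : A,
      PathRel K V A s t (ι K (Sum.inl (s a)) * ι K (Sum.inr a)) (ι K (Sum.inr a))
  | tgt : ∀ a : A,
      PathRel K V A s t (ι K (Sum.inr a) * ι K (Sum.inl (t a))) (ι K (Sum.inr a))

/-- The path algebra `KQ`. -/
abbrev PathAlg (K V A : Type) [Field K] [Fintype V] [DecidableEq V] (s t : A → V) : Type :=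
  RingQuot (PathRel K V A s t)

section

variable (K V A : Type) [Field K] [Fintype V] [DecidableEq V] (s t : A → V)

/-- The element of `KQ` corresponding to an arrow. -/
noncomputable def arrow (a : A) : PathAlg K V A s t :=
  RingQuot.mkAlgHom K (PathRel K V A s t) (ι K (Sum.inr a))

/-- The idempotent of `KQ` corresponding to a vertex (trivial path). -/
noncomputable def vtx (v : V) : PathAlg K V A s t :=
  RingQuot.mkAlgHom K (PathRel K V A s t) (ι K (Sum.inl v))

/-- The element of `KQ` given by a path, recorded as its list of arrows. -/
noncomputable def pathElem (l : List A) : PathAlg K V A s t :=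
  (l.map (arrow K V A s t)).prod

/-- The ideal `J²`, where `J` is the arrow ideal: it is generated by the
products of two arrows (equivalently, by the paths of length 2). -/
def JSqIdeal : TwoSidedIdeal (PathAlg K V A s t) :=
  TwoSidedIdeal.span {x | ∃ a b : A, x = arrow K V A s t a * arrow K V A s t b}

/-- An ideal `I` of `KQ` is admissible if `J^N ⊆ I ⊆ J²` for some `N ≥ 2`;
`J^N ⊆ I` amounts to all paths of length `N` lying in `I`. -/
def Admissible (I : TwoSidedIdeal (PathAlg K V A s t)) : Prop :=
  ∃ N : ℕ, 2 ≤ N ∧ (∀ l : List A, l.length = N → pathElem K V A s t l ∈ I) ∧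
    I ≤ JSqIdeal K V A s t

/-- Condition (M): for every arrow `a` there is at most one arrow `b` with
`ab ∉ I` and at most one arrow `c` with `ca ∉ I`. -/
def ConditionM (I : TwoSidedIdeal (PathAlg K V A s t)) : Prop :=
  ∀ a : A,
    (∀ b b' : A, arrow K V A s t a * arrow K V A s t b ∉ I →
      arrow K V A s t a * arrow K V A s t b' ∉ I → b = b') ∧
    (∀ c c' : A, arrow K V A s t c * arrow K V A s t a ∉ I →
      arrow K V A s t c' * arrow K V A s t a ∉ I → c = c')

/-- `σ : Q₁ → Q₁ ∪ {⋄}` (with `⋄ = none`): `σ a = some b` iff `ab ∉ I`. -/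
def SigmaSpec (I : TwoSidedIdeal (PathAlg K V A s t)) (σ : A → Option A) : Prop :=
  ∀ a b : A, σ a = some b ↔ arrow K V A s t a * arrow K V A s t b ∉ I

/-- `τ : Q₁ → Q₁ ∪ {⋄}` (with `⋄ = none`): `τ a = some c` iff `ca ∉ I`. -/
def TauSpec (I : TwoSidedIdeal (PathAlg K V A s t)) (τ : A → Option A) : Prop :=
  ∀ a c : A, τ a = some c ↔ arrow K V A s t c * arrow K V A s t a ∉ I

end

/-- Iterate of `σ` (extended to `Q₁ ∪ {⋄}` by `σ(⋄) = ⋄`) applied to an arrow: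
`OIter σ n a = σⁿ(a)`. -/
def OIter {A : Type} (σ : A → Option A) (n : ℕ) (a : A) : Option A :=
  (fun o => o.bind σ)^[n] (some a)

/-- A `(σ,τ)`-maximal path `a₁ ⋯ a_r`: `σ(aᵢ) = a_{i+1}`, `σ(a_r) = ⋄`,
`τ(a₁) = ⋄`. -/
def IsMaximalPath {A : Type} (σ τ : A → Option A) (l : List A) : Prop :=
  l ≠ [] ∧ l.Chain' (fun x y => σ x = some y) ∧
    (∀ x ∈ l.getLast?, σ x = none) ∧ (∀ x ∈ l.head?, τ x = none)

/-- The cycle `C_a = a σ(a) ⋯ σ^{m̂_a−1}(a)`, where `m̂_a` is the least positive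
integer with `σ^{m̂_a}(a) = a`:  `l` has entries the iterates of `σ` at `a` and
length the least positive return time of `a` under `σ`. -/
def IsSigmaCycleOf {A : Type} (σ : A → Option A) (a : A) (l : List A) : Prop :=
  l ≠ [] ∧ (∀ i : ℕ, i < l.length → l[i]? = OIter σ i a) ∧
    OIter σ l.length a = some a ∧
    ∀ k : ℕ, 0 < k → k < l.length → OIter σ k a ≠ some a

/-- A list of arrows is composable (i.e. a genuine path) if the target of each
arrow is the source of the next. -/
def Composable {V A : Type} (s t : A → V) (l : List A) : Prop :=
  l.Chain' (fun a b => t a = s b)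

/-- A simple cycle: a nonempty path with the same start and end vertex and no
repeated arrows. -/
def IsSimpleCycle {V A : Type} (s t : A → V) (l : List A) : Prop :=
  l ≠ [] ∧ Composable s t l ∧ (∀ x ∈ l.head?, ∀ y ∈ l.getLast?, t y = s x) ∧ l.Nodup

/-- The path `C^m` for a cycle `C`. -/
def cyclePow {A : Type} (l : List A) (m : ℕ) : List A := (List.replicate m l).flatten

/-- A defining pair `(𝒮, μ)` in the quiver `Q`: a set `𝒮` of simple cycles and
`μ : 𝒮 → ℤ_{>0}` satisfying (D0)–(D4). -/
def IsDefiningPair {V A : Type} (s t : A → V) (S : Set (List A)) (μ : List A → ℕ) : Prop :=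
  (∀ l ∈ S, IsSimpleCycle s t l) ∧
  (∀ l ∈ S, 0 < μ l) ∧
  (∀ l ∈ S, l.length = 1 → 1 < μ l) ∧
  (∀ l ∈ S, ∀ l' : List A, l.IsRotated l' → l' ∈ S) ∧
  (∀ l ∈ S, ∀ l' ∈ S, l.IsRotated l' → μ l = μ l') ∧
  (∀ a : A, ∃ l ∈ S, a ∈ l) ∧
  (∀ l ∈ S, ∀ l' ∈ S, (∃ a : A, a ∈ l ∧ a ∈ l') → l.IsRotated l')

/-- The set of relations of Types 1, 2 and 3 attached to a defining pair:
Type 1: `C^{μ(C)} − C'^{μ(C')}` for `C, C' ∈ 𝒮` cycles at the same vertex;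
Type 2: `C^{μ(C)} a` for `C ∈ 𝒮` with first arrow `a`;
Type 3: `ab` for arrows `a, b` with `ab` not a subpath of any `C^s`, `C ∈ 𝒮`. -/
def RelSet (K V A : Type) [Field K] [Fintype V] [DecidableEq V] (s t : A → V)
    (S : Set (List A)) (μ : List A → ℕ) : Set (PathAlg K V A s t) :=
  {x | ∃ l ∈ S, ∃ l' ∈ S, ∃ a ∈ l.head?, ∃ a' ∈ l'.head?, s a = s a' ∧
      x = pathElem K V A s t (cyclePow l (μ l)) - pathElem K V A s t (cyclePow l' (μ l'))} ∪
  {x | ∃ l ∈ S, ∃ a ∈ l.head?, x = pathElem K V A s t (cyclePow l (μ l) ++ [a])} ∪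
  {x | ∃ a b : A, x = arrow K V A s t a * arrow K V A s t b ∧
      ∀ l ∈ S, ∀ m : ℕ, ¬ [a, b] <:+: cyclePow l m}

/-- The ideal of relations of a defining pair. -/
def DefIdeal (K V A : Type) [Field K] [Fintype V] [DecidableEq V] (s t : A → V)
    (S : Set (List A)) (μ : List A → ℕ) : TwoSidedIdeal (PathAlg K V A s t) :=
  TwoSidedIdeal.span (RelSet K V A s t S μ)

/-- The relation whose `RingQuot` is the algebra `KQ/I` defined by a defining
pair, `I` generated by the Type 1, 2, 3 relations. -/
def QRel (K V A : Type) [Field K] [Fintype V] [DecidableEq V] (s t : A → V)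
    (S : Set (List A)) (μ : List A → ℕ) :
    PathAlg K V A s t → PathAlg K V A s t → Prop :=
  fun x y => x ∈ RelSet K V A s t S μ ∧ y = 0

/-- The radical square zero algebra `A = KQ/J²`. -/
abbrev RadSqAlg (K V A : Type) [Field K] [Fintype V] [DecidableEq V] (s t : A → V) : Type :=
  RingQuot (fun x y : PathAlg K V A s t =>
    (∃ a b : A, x = arrow K V A s t a * arrow K V A s t b) ∧ y = 0)

/-! The `K`-dual `D(A) = Hom_K(A, K)` of `A = KQ/J²` as an `A`-`A`-bimodule:
`(r • f)(x) = f(x r)` and `(op b • f)(x) = f(b x)`. -/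

section Dual

variable {K V A : Type} [Field K] [Fintype V] [DecidableEq V] {s t : A → V}

noncomputable instance dualLeftSMul :
    SMul (RadSqAlg K V A s t) (Module.Dual K (RadSqAlg K V A s t)) :=
  ⟨fun r f => f ∘ₗ LinearMap.mulRight K r⟩

noncomputable instance dualLeftModule :
    Module (RadSqAlg K V A s t) (Module.Dual K (RadSqAlg K V A s t)) where
  smul := (· • ·)
  one_smul f := by ext x; show f (x * 1) = f x; rw [mul_one]
  mul_smul r r' f := by ext x; show f (x * (r * r')) = f (x * r * r'); rw [mul_assoc]
  smul_zero r := by ext x; rfl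
  smul_add r f g := by ext x; rfl
  add_smul r r' f := by
    ext x; show f (x * (r + r')) = f (x * r) + f (x * r'); rw [mul_add, map_add]
  zero_smul f := by ext x; show f (x * 0) = 0; rw [mul_zero, map_zero]

noncomputable instance dualRightSMul :
    SMul (RadSqAlg K V A s t)ᵐᵒᵖ (Module.Dual K (RadSqAlg K V A s t)) :=
  ⟨fun b f => f ∘ₗ LinearMap.mulLeft K b.unop⟩

noncomputable instance dualRightModule :
    Module (RadSqAlg K V A s t)ᵐᵒᵖ (Module.Dual K (RadSqAlg K V A s t)) where
  smul := (· • ·)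
  one_smul f := by ext x; show f (1 * x) = f x; rw [one_mul]
  mul_smul b b' f := by
    ext x
    show f ((MulOpposite.unop b' * MulOpposite.unop b) * x) =
      f (MulOpposite.unop b' * (MulOpposite.unop b * x))
    rw [mul_assoc]
  smul_zero b := by ext x; rfl
  smul_add b f g := by ext x; rfl
  add_smul b b' f := by
    ext x
    show f ((MulOpposite.unop b + MulOpposite.unop b') * x) =
      f (MulOpposite.unop b * x) + f (MulOpposite.unop b' * x)
    rw [add_mul, map_add]
  zero_smul f := by ext x; show f (0 * x) = 0; rw [zero_mul, map_zero]

instance dualSMulComm :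
    SMulCommClass (RadSqAlg K V A s t) (RadSqAlg K V A s t)ᵐᵒᵖ
      (Module.Dual K (RadSqAlg K V A s t)) :=
  ⟨fun r b f => by
    ext x
    show f (MulOpposite.unop b * (x * r)) = f (MulOpposite.unop b * x * r)
    rw [mul_assoc]⟩

instance dualTowerLeft :
    IsScalarTower K (RadSqAlg K V A s t) (Module.Dual K (RadSqAlg K V A s t)) :=
  ⟨fun k r f => by
    ext x
    show f (x * k • r) = k • f (x * r)
    rw [mul_smul_comm, map_smul]⟩

instance dualTowerRight :
    IsScalarTower K (RadSqAlg K V A s t)ᵐᵒᵖ (Module.Dual K (RadSqAlg K V A s t)) :=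
  ⟨fun k b f => by
    ext x
    show f (k • MulOpposite.unop b * x) = k • f (MulOpposite.unop b * x)
    rw [smul_mul_assoc, map_smul]⟩

end Dual

/-- The trivial extension `A ⋉ D(A)`, with `D(A) = Hom_K(A, K)`. -/
abbrev TrivExt (K V A : Type) [Field K] [Fintype V] [DecidableEq V] (s t : A → V) : Type :=
  TrivSqZeroExt (RadSqAlg K V A s t) (Module.Dual K (RadSqAlg K V A s t))

/-- A `K`-algebra is special multiserial if it is isomorphic to a quotient
`KQ'/I'` of a path algebra of a finite quiver by an admissible ideal
satisfying condition (M). -/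
def IsSpecialMultiserialAlgebra (K : Type) [Field K] (B : Type) [Ring B] [Algebra K B] :
    Prop :=
  ∃ (V' A' : Type) (iV : Fintype V') (dV : DecidableEq V') (_ : Fintype A')
      (s' t' : A' → V'),
    letI := iV
    letI := dV
    ∃ I' : TwoSidedIdeal (PathAlg K V' A' s' t'),
      Admissible K V' A' s' t' I' ∧ ConditionM K V' A' s' t' I' ∧
      Nonempty (RingQuot (fun x y : PathAlg K V' A' s' t' => x - y ∈ I') ≃ₐ[K] B)

/-! Reading off the coefficients of `A = KQ/J²` gives characters at the vertices and point
derivations at the arrows, so a homomorphism into `A` is the same as a family of characters and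
point derivations. On `T = A ⋉ D(A)` the symmetrizing form is `(a, f) ↦ f(1)`. Every character
kills the Jacobson radical, hence in a product of three radical elements of `T` all terms contain a
product of two elements of `rad A` and vanish.

`T` is generated by the vertices and arrows of `Q`, the dual basis functionals of the arrows
(reversed arrows) and the characters at the isolated vertices (loops); the other characters are
products of an arrow with its reverse. Let `Q'` be the quiver with these arrows. A product of two
arrows of `Q'` vanishes in `T` unless they are mutually reverse, which is condition (M). The arrows
of `Q'` have dual point derivations on `T`; together with the characters these form a map from `T`
to the radical square zero algebra `KQ'/J'²`, whose composite with the presentation `KQ' → T` is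
the projection. So the relations of `T` lie in `J'²`, while all paths of length three are zero in
`T`. -/

theorem algHom_apply_eq_zero_of_mem_jacobson {K B : Type*} [Field K] [Ring B] [Algebra K B]
    (f : B →ₐ[K] K) {x : B} (hx : x ∈ (⊥ : Ideal B).jacobson) : f x = 0 := by
  have hf : Function.Surjective (f : B →+* K) := fun k => ⟨algebraMap K B k, f.commutes k⟩
  have : RingHomSurjective (f : B →+* K) := ⟨hf⟩
  rw [Ideal.jacobson_bot] at hx
  simpa only [IsSemisimpleRing.jacobson_eq_bot, Ideal.mem_comap, Ideal.mem_bot, RingHom.coe_coe]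
    using Ring.le_comap_jacobson (f : B →+* K) hx

theorem sub_mem_of_mkRingHom_eq {R : Type*} [Ring R] {r : R → R → Prop} {I : TwoSidedIdeal R}
    (hr : ∀ ⦃x y⦄, r x y → x - y ∈ I) {x y : R}
    (h : RingQuot.mkRingHom r x = RingQuot.mkRingHom r y) : x - y ∈ I := by
  have hr' : ∀ ⦃x y⦄, r x y → I.ringCon.mk' x = I.ringCon.mk' y := fun x y hxy =>
    (RingCon.eq _).2 ((TwoSidedIdeal.rel_iff I x y).2 (hr hxy))
  have hxy := congrArg (RingQuot.lift ⟨I.ringCon.mk', hr'⟩) h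
  rw [RingQuot.lift_mkRingHom_apply, RingQuot.lift_mkRingHom_apply] at hxy
  exact (TwoSidedIdeal.rel_iff I x y).1 ((RingCon.eq _).1 hxy)

/-- The first isomorphism theorem for the quotient of an algebra by the two-sided kernel of a
surjective homomorphism, with the quotient formed as a `RingQuot`. -/
noncomputable def ringQuotKerEquiv {K B C : Type*} [CommRing K] [Ring B] [Algebra K B] [Ring C]
    [Algebra K C] (f : B →ₐ[K] C) (hf : Function.Surjective f) :
    RingQuot (fun x y : B => x - y ∈ TwoSidedIdeal.ker f) ≃ₐ[K] C :=
  AlgEquiv.ofBijective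
    (RingQuot.liftAlgHom K ⟨f, fun x y h => by
      rwa [TwoSidedIdeal.mem_ker, map_sub, sub_eq_zero] at h⟩) <| by
    constructor
    · intro x y hxy
      obtain ⟨x, rfl⟩ := RingQuot.mkAlgHom_surjective K _ x
      obtain ⟨y, rfl⟩ := RingQuot.mkAlgHom_surjective K _ y
      rw [RingQuot.liftAlgHom_mkAlgHom_apply, RingQuot.liftAlgHom_mkAlgHom_apply] at hxy
      refine RingQuot.mkAlgHom_rel K ?_
      rw [TwoSidedIdeal.mem_ker, map_sub, hxy, sub_self]
    · intro z
      obtain ⟨x, rfl⟩ := hf z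
      exact ⟨RingQuot.mkAlgHom K _ x, RingQuot.liftAlgHom_mkAlgHom_apply ..⟩

/-- A `K`-linear functional `d` on `B` is a point derivation from `χ` to `ψ`, for characters
`χ` and `ψ` of `B`, if `d` is a derivation into the bimodule `K` on which `B` acts through `χ` on
the left and `ψ` on the right. -/
def IsPointDerivation {K B : Type*} [CommSemiring K] [Semiring B] [Algebra K B]
    (χ ψ : B →ₐ[K] K) (d : B →ₗ[K] K) : Prop :=
  ∀ x y, d (x * y) = χ x * d y + d x * ψ y

namespace IsPointDerivation

theorem map_one {K B : Type*} [CommRing K] [Semiring B] [Algebra K B] {χ ψ : B →ₐ[K] K}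
    {d : B →ₗ[K] K} (hd : IsPointDerivation χ ψ d) : d 1 = 0 := by
  simpa using hd 1 1

theorem comp {K B C : Type*} [CommSemiring K] [Semiring B] [Algebra K B] [Semiring C]
    [Algebra K C] {χ ψ : B →ₐ[K] K} {d : B →ₗ[K] K} (hd : IsPointDerivation χ ψ d)
    (f : C →ₐ[K] B) : IsPointDerivation (χ.comp f) (ψ.comp f) (d ∘ₗ f.toLinearMap) := fun x y => by
  simp [hd (f x) (f y)]

end IsPointDerivation

/-- Elements `E v` and `F a` of an algebra, indexed by the vertices and arrows of the quiver with
source and target maps `s` and `t`, that satisfy the defining relations of its path algebra. -/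
structure IsPathFamily {V A B : Type*} [Fintype V] [Semiring B] (s t : A → V) (E : V → B)
    (F : A → B) : Prop extends CompleteOrthogonalIdempotents E where
  source_mul : ∀ a, E (s a) * F a = F a
  mul_target : ∀ a, F a * E (t a) = F a

namespace IsPathFamily

section

variable {V A B C : Type*} [Fintype V] [Semiring B] [Semiring C] {s t : A → V}
  {E : V → B} {F : A → B}

theorem map (h : IsPathFamily s t E F) (f : B →+* C) : IsPathFamily s t (f ∘ E) (f ∘ F) where
  toCompleteOrthogonalIdempotents := h.toCompleteOrthogonalIdempotents.map f
  source_mul a := by simp [← map_mul, h.source_mul]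
  mul_target a := by simp [← map_mul, h.mul_target]

variable [DecidableEq V]

theorem vertex_mul_arrow (h : IsPathFamily s t E F) (v : V) (a : A) :
    E v * F a = if v = s a then F a else 0 := by
  rw [← h.source_mul a, ← mul_assoc, h.mul_eq]
  split_ifs with hv
  · rw [hv]
  · rw [zero_mul]

theorem arrow_mul_vertex (h : IsPathFamily s t E F) (a : A) (v : V) :
    F a * E v = if t a = v then F a else 0 := by
  rw [← h.mul_target a, mul_assoc, h.mul_eq]
  split_ifs
  · rfl
  · rw [mul_zero]

end

variable {K V A : Type} [Field K] [Fintype V] [DecidableEq V] {s t : A → V}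
  {B : Type*} [Semiring B] [Algebra K B] {E : V → B} {F : A → B}

/-- The homomorphism out of the path algebra given by its universal property. -/
noncomputable def lift (h : IsPathFamily s t E F) : PathAlg K V A s t →ₐ[K] B :=
  RingQuot.liftAlgHom K ⟨FreeAlgebra.lift K (Sum.elim E F), by
    rintro _ _ (⟨v, w⟩ | - | a | a)
    · simp [h.mul_eq, apply_ite (FreeAlgebra.lift K (Sum.elim E F))]
    · simp [h.complete]
    · simp [h.source_mul]
    · simp [h.mul_target]⟩

@[simp]
theorem lift_vtx (h : IsPathFamily s t E F) (v : V) : h.lift (vtx K V A s t v) = E v := by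
  simp [lift, vtx]

@[simp]
theorem lift_arrow (h : IsPathFamily s t E F) (a : A) : h.lift (arrow K V A s t a) = F a := by
  simp [lift, arrow]

end IsPathFamily

namespace PathAlg

variable {K V A : Type} [Field K] [Fintype V] [DecidableEq V] {s t : A → V}

theorem isPathFamily : IsPathFamily s t (vtx K V A s t) (arrow K V A s t) where
  toOrthogonalIdempotents := OrthogonalIdempotents.iff_mul_eq.2 fun v w => by
    have h := RingQuot.mkAlgHom_rel K (PathRel.vtxMul (K := K) (s := s) (t := t) v w)
    simpa [apply_ite (RingQuot.mkAlgHom K (PathRel K V A s t))] using! h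
  complete := by
    simpa using! RingQuot.mkAlgHom_rel K (PathRel.unit (K := K) (s := s) (t := t))
  source_mul a := by
    simpa using! RingQuot.mkAlgHom_rel K (PathRel.src (K := K) (s := s) (t := t) a)
  mul_target a := by
    simpa using! RingQuot.mkAlgHom_rel K (PathRel.tgt (K := K) (s := s) (t := t) a)

theorem algHom_ext {B : Type*} [Semiring B] [Algebra K B] {f g : PathAlg K V A s t →ₐ[K] B}
    (hvtx : ∀ v, f (vtx K V A s t v) = g (vtx K V A s t v))
    (harrow : ∀ a, f (arrow K V A s t a) = g (arrow K V A s t a)) : f = g :=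
  RingQuot.ringQuot_ext' K _ _ <| FreeAlgebra.hom_ext <| funext <| Sum.rec hvtx harrow

end PathAlg

namespace RadSqAlg

variable {K V A : Type} [Field K] [Fintype V] [DecidableEq V] {s t : A → V}

variable (K s t) in
/-- The projection `KQ → KQ/J²`. -/
noncomputable def mk : PathAlg K V A s t →ₐ[K] RadSqAlg K V A s t :=
  RingQuot.mkAlgHom K _

variable (K s t) in
/-- The class in `KQ/J²` of the trivial path at a vertex. -/
noncomputable def vtx (v : V) : RadSqAlg K V A s t :=
  mk K s t (_root_.vtx K V A s t v)

variable (K s t) in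
/-- The class in `KQ/J²` of an arrow. -/
noncomputable def arrow (a : A) : RadSqAlg K V A s t :=
  mk K s t (_root_.arrow K V A s t a)

@[simp]
theorem mk_vtx (v : V) : mk K s t (_root_.vtx K V A s t v) = vtx K s t v :=
  rfl

@[simp]
theorem mk_arrow (a : A) : mk K s t (_root_.arrow K V A s t a) = arrow K s t a :=
  rfl

theorem isPathFamily : IsPathFamily s t (vtx K s t) (arrow K s t) :=
  PathAlg.isPathFamily.map (mk K s t : PathAlg K V A s t →+* RadSqAlg K V A s t)

@[simp]
theorem vtx_mul_vtx (v w : V) :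
    vtx K s t v * vtx K s t w = if v = w then vtx K s t v else 0 :=
  isPathFamily.mul_eq v w

@[simp]
theorem vtx_mul_arrow (v : V) (a : A) :
    vtx K s t v * arrow K s t a = if v = s a then arrow K s t a else 0 :=
  isPathFamily.vertex_mul_arrow v a

@[simp]
theorem arrow_mul_vtx (a : A) (v : V) :
    arrow K s t a * vtx K s t v = if t a = v then arrow K s t a else 0 :=
  isPathFamily.arrow_mul_vertex a v

@[simp]
theorem arrow_mul_arrow (a b : A) : arrow K s t a * arrow K s t b = 0 := by
  rw [arrow, arrow, ← map_mul, ← map_zero (mk K s t)]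
  exact RingQuot.mkAlgHom_rel K ⟨⟨a, b, rfl⟩, rfl⟩

theorem mem_JSqIdeal_of_mk_eq_zero {x : PathAlg K V A s t} (hx : mk K s t x = 0) :
    x ∈ JSqIdeal K V A s t := by
  rw [mk, ← AlgHom.coe_toRingHom, RingQuot.mkAlgHom_coe] at hx
  rw [← sub_zero x]
  refine sub_mem_of_mkRingHom_eq ?_ (hx.trans (map_zero _).symm)
  rintro y _ ⟨hy, rfl⟩
  rw [sub_zero]
  exact TwoSidedIdeal.subset_span hy

section UniversalProperty

variable {B : Type*} [Semiring B] [Algebra K B]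

/-- The homomorphism out of `KQ/J²` given by its universal property. -/
noncomputable def lift {E : V → B} {F : A → B} (h : IsPathFamily s t E F)
    (hF : ∀ a b, F a * F b = 0) : RadSqAlg K V A s t →ₐ[K] B :=
  RingQuot.liftAlgHom K ⟨h.lift, by
    rintro _ _ ⟨⟨a, b, rfl⟩, rfl⟩
    simp [hF]⟩

theorem lift_mk {E : V → B} {F : A → B} (h : IsPathFamily s t E F) (hF : ∀ a b, F a * F b = 0)
    (x : PathAlg K V A s t) : lift h hF (mk K s t x) = h.lift x :=
  RingQuot.liftAlgHom_mkAlgHom_apply ..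

@[simp]
theorem lift_vtx {E : V → B} {F : A → B} (h : IsPathFamily s t E F)
    (hF : ∀ a b, F a * F b = 0) (v : V) : lift h hF (vtx K s t v) = E v := by
  rw [vtx, lift_mk, h.lift_vtx]

@[simp]
theorem lift_arrow {E : V → B} {F : A → B} (h : IsPathFamily s t E F)
    (hF : ∀ a b, F a * F b = 0) (a : A) : lift h hF (arrow K s t a) = F a := by
  rw [arrow, lift_mk, h.lift_arrow]

theorem algHom_ext {f g : RadSqAlg K V A s t →ₐ[K] B}
    (hvtx : ∀ v, f (vtx K s t v) = g (vtx K s t v))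
    (harrow : ∀ a, f (arrow K s t a) = g (arrow K s t a)) : f = g :=
  RingQuot.ringQuot_ext' K _ _ <| PathAlg.algHom_ext hvtx harrow

end UniversalProperty

theorem induction {P : RadSqAlg K V A s t → Prop}
    (algebraMap : ∀ k : K, P (algebraMap K _ k)) (vtx : ∀ v, P (vtx K s t v))
    (arrow : ∀ a, P (arrow K s t a)) (add : ∀ x y, P x → P y → P (x + y))
    (mul : ∀ x y, P x → P y → P (x * y)) (x : RadSqAlg K V A s t) : P x := by
  obtain ⟨x, rfl⟩ := RingQuot.mkAlgHom_surjective K _ x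
  obtain ⟨x, rfl⟩ := RingQuot.mkAlgHom_surjective K _ x
  induction x using FreeAlgebra.induction with
  | grade0 k => simpa only [AlgHom.commutes] using algebraMap k
  | grade1 i => exact i.rec vtx arrow
  | mul x y hx hy => simpa only [map_mul] using mul _ _ hx hy
  | add x y hx hy => simpa only [map_add] using add _ _ hx hy

variable (K s t) in
/-- The character of `KQ/J²` reading off the coefficient of the trivial path at `v`; it gives the
simple module at `v`. -/
noncomputable def character (v : V) : RadSqAlg K V A s t →ₐ[K] K :=
  lift (E := fun w => if w = v then 1 else 0) (F := 0)
    { toOrthogonalIdempotents := OrthogonalIdempotents.iff_mul_eq.2 fun a b => by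
        split_ifs <;> simp_all
      complete := by simp
      source_mul := by simp
      mul_target := by simp } (by simp)

@[simp]
theorem character_vtx (v w : V) : character K s t v (vtx K s t w) = if w = v then 1 else 0 :=
  lift_vtx ..

@[simp]
theorem character_arrow (v : V) (a : A) : character K s t v (arrow K s t a) = 0 :=
  lift_arrow ..

open Classical in
variable (K s t) in
/-- The two-dimensional representation of `KQ/J²` by upper triangular matrices whose only
nontrivial arrow is `a`. -/
noncomputable def arrowRep (a : A) : RadSqAlg K V A s t →ₐ[K] Matrix (Fin 2) (Fin 2) K :=
  lift (E := fun v => !![if v = s a then 1 else 0, 0; 0, if v = t a then 1 else 0])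
    (F := fun b => !![0, if b = a then 1 else 0; 0, 0])
    { toOrthogonalIdempotents := OrthogonalIdempotents.iff_mul_eq.2 fun v w => by
        ext i j
        fin_cases i <;> fin_cases j <;> simp <;> split_ifs <;> simp_all
      complete := by
        ext i j
        fin_cases i <;> fin_cases j <;> simp [Matrix.sum_apply]
      source_mul := fun b => by
        ext i j
        rw [Matrix.mul_apply, Fin.sum_univ_two]
        by_cases h : b = a <;> fin_cases i <;> fin_cases j <;> simp [h]
      mul_target := fun b => by
        ext i j
        rw [Matrix.mul_apply, Fin.sum_univ_two]
        by_cases h : b = a <;> fin_cases i <;> fin_cases j <;> simp [h] }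
    fun b c => by
      ext i j
      rw [Matrix.mul_apply, Fin.sum_univ_two]
      fin_cases i <;> fin_cases j <;> simp

theorem arrowRep_apply_entries (a : A) (x : RadSqAlg K V A s t) :
    arrowRep K s t a x 0 0 = character K s t (s a) x ∧
      arrowRep K s t a x 1 0 = 0 ∧ arrowRep K s t a x 1 1 = character K s t (t a) x := by
  induction x using induction with
  | algebraMap k => simp [Matrix.algebraMap_matrix_apply]
  | vtx v => simp [arrowRep]
  | arrow b => simp [arrowRep]
  | add x y hx hy => simp [hx, hy]
  | mul x y hx hy => simp [hx, hy, Matrix.mul_apply]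

variable (K s t) in
/-- The functional on `KQ/J²` reading off the coefficient of the arrow `a`. -/
noncomputable def arrowCoeff (a : A) : RadSqAlg K V A s t →ₗ[K] K :=
  Matrix.entryLinearMap K K 0 1 ∘ₗ (arrowRep K s t a).toLinearMap

theorem isPointDerivation_arrowCoeff (a : A) :
    IsPointDerivation (character K s t (s a)) (character K s t (t a)) (arrowCoeff K s t a) :=
  fun x y => by simp [arrowCoeff, Matrix.mul_apply, arrowRep_apply_entries]

@[simp]
theorem arrowCoeff_vtx (a : A) (v : V) : arrowCoeff K s t a (vtx K s t v) = 0 := by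
  simp [arrowCoeff, arrowRep]

@[simp]
theorem arrowCoeff_arrow [DecidableEq A] (a b : A) :
    arrowCoeff K s t a (arrow K s t b) = if b = a then 1 else 0 := by
  by_cases h : b = a <;> simp [arrowCoeff, arrowRep, h]

/-- An algebra homomorphism `B → KQ/J²` is the same as a character of `B` for each vertex
and a point derivation for each arrow; this is the homomorphism with the given coefficients. -/
noncomputable def ofCoeffs [Fintype A] {B : Type*} [Semiring B] [Algebra K B]
    (χ : V → B →ₐ[K] K) (d : A → B →ₗ[K] K)
    (hd : ∀ a, IsPointDerivation (χ (s a)) (χ (t a)) (d a)) : B →ₐ[K] RadSqAlg K V A s t :=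
  AlgHom.ofLinearMap
    (∑ v, (χ v).toLinearMap.smulRight (vtx K s t v) + ∑ a, (d a).smulRight (arrow K s t a))
    (by simpa [(hd _).map_one] using isPathFamily.complete)
    fun x y => by
      simp only [LinearMap.add_apply, LinearMap.sum_apply, LinearMap.smulRight_apply,
        AlgHom.toLinearMap_apply, map_mul, hd _ x y, add_smul, Finset.sum_add_distrib, add_mul,
        mul_add, Finset.sum_mul_sum, smul_mul_smul_comm, vtx_mul_vtx, vtx_mul_arrow,
        arrow_mul_vtx, arrow_mul_arrow, smul_zero, smul_ite, Finset.sum_ite_eq, Finset.mem_univ,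
        if_true, Finset.sum_const_zero, add_zero, add_assoc]
      rw [Finset.sum_comm (s := Finset.univ (α := V))]
      simp only [Finset.sum_ite_eq', Finset.mem_univ, if_true]
      rw [add_comm (∑ a, (χ (s a) x * d a y) • arrow K s t a)]

theorem ofCoeffs_apply [Fintype A] {B : Type*} [Semiring B] [Algebra K B]
    {χ : V → B →ₐ[K] K} {d : A → B →ₗ[K] K}
    (hd : ∀ a, IsPointDerivation (χ (s a)) (χ (t a)) (d a)) (x : B) :
    ofCoeffs χ d hd x = ∑ v, χ v x • vtx K s t v + ∑ a, d a x • arrow K s t a := by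
  simp [ofCoeffs]

theorem eq_sum_coeffs [Fintype A] (x : RadSqAlg K V A s t) :
    x = ∑ v, character K s t v x • vtx K s t v + ∑ a, arrowCoeff K s t a x • arrow K s t a := by
  classical
  have hid : AlgHom.id K (RadSqAlg K V A s t) =
      ofCoeffs (character K s t) (arrowCoeff K s t) isPointDerivation_arrowCoeff :=
    algHom_ext (by simp [ofCoeffs_apply]) (by simp [ofCoeffs_apply])
  exact (DFunLike.congr_fun hid x).trans (ofCoeffs_apply _ x)

theorem mul_eq_zero_of_character [Finite A] {x y : RadSqAlg K V A s t}
    (hx : ∀ v, character K s t v x = 0) (hy : ∀ v, character K s t v y = 0) : x * y = 0 := by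
  cases nonempty_fintype A
  rw [eq_sum_coeffs x, eq_sum_coeffs y]
  simp [hx, hy, Finset.sum_mul_sum]

theorem mul_arrow (x : RadSqAlg K V A s t) (a : A) :
    x * arrow K s t a = character K s t (s a) x • arrow K s t a := by
  induction x using induction with
  | algebraMap k => simp [Algebra.smul_def]
  | vtx v => simp
  | arrow b => simp
  | add x y hx hy => simp [add_mul, add_smul, hx, hy]
  | mul x y hx hy => simp [mul_assoc, hx, hy, smul_smul, mul_comm]

theorem arrow_mul (a : A) (x : RadSqAlg K V A s t) :
    arrow K s t a * x = character K s t (t a) x • arrow K s t a := by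
  induction x using induction with
  | algebraMap k => simp [Algebra.smul_def, Algebra.commutes]
  | vtx v => simp [eq_comm]
  | arrow b => simp
  | add x y hx hy => simp [mul_add, add_smul, hx, hy]
  | mul x y hx hy => simp [← mul_assoc, hx, hy, smul_smul]

theorem dual_eq_sum_coeffs [Fintype A] (f : Module.Dual K (RadSqAlg K V A s t)) :
    f = ∑ v, f (vtx K s t v) • (character K s t v).toLinearMap +
      ∑ a, f (arrow K s t a) • arrowCoeff K s t a := by
  ext x
  nth_rewrite 1 [eq_sum_coeffs x]
  simp [mul_comm]

end RadSqAlg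

/-- A vertex of the quiver with source and target maps `s` and `t` is isolated if no arrow starts
or ends there. -/
def IsIsolated {V A : Type*} (s t : A → V) (v : V) : Prop :=
  ∀ a, s a ≠ v ∧ t a ≠ v

namespace IsIsolated

variable {K V A : Type} [Field K] [Fintype V] [DecidableEq V] {s t : A → V} {v : V}

theorem mul_vtx (hv : IsIsolated s t v) (x : RadSqAlg K V A s t) :
    x * RadSqAlg.vtx K s t v = RadSqAlg.character K s t v x • RadSqAlg.vtx K s t v := by
  induction x using RadSqAlg.induction with
  | algebraMap k => simp [Algebra.smul_def]
  | vtx w => aesop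
  | arrow a => simp [(hv a).2]
  | add x y hx hy => simp [add_mul, add_smul, hx, hy]
  | mul x y hx hy => simp [mul_assoc, hx, hy, smul_smul, mul_comm]

theorem vtx_mul (hv : IsIsolated s t v) (x : RadSqAlg K V A s t) :
    RadSqAlg.vtx K s t v * x = RadSqAlg.character K s t v x • RadSqAlg.vtx K s t v := by
  induction x using RadSqAlg.induction with
  | algebraMap k => simp [Algebra.smul_def, Algebra.commutes]
  | vtx w => simp [eq_comm]
  | arrow a => simp [(hv a).1.symm]
  | add x y hx hy => simp [mul_add, add_smul, hx, hy]
  | mul x y hx hy => simp [← mul_assoc, hx, hy, smul_smul]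

end IsIsolated

section DualAction

open MulOpposite

variable {K V A : Type} [Field K] [Fintype V] [DecidableEq V] {s t : A → V}

namespace RadSqAlg

@[simp]
theorem smul_dual_apply (r : RadSqAlg K V A s t) (f : Module.Dual K (RadSqAlg K V A s t))
    (x : RadSqAlg K V A s t) : (r • f) x = f (x * r) :=
  rfl

@[simp]
theorem op_smul_dual_apply (r : RadSqAlg K V A s t) (f : Module.Dual K (RadSqAlg K V A s t))
    (x : RadSqAlg K V A s t) : (op r • f) x = f (r * x) :=
  rfl

theorem smul_algHom (r : RadSqAlg K V A s t) (χ : RadSqAlg K V A s t →ₐ[K] K) :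
    r • χ.toLinearMap = χ r • χ.toLinearMap := by
  ext x
  simp [mul_comm]

theorem op_smul_algHom (r : RadSqAlg K V A s t) (χ : RadSqAlg K V A s t →ₐ[K] K) :
    op r • χ.toLinearMap = χ r • χ.toLinearMap := by
  ext x
  simp

end RadSqAlg

namespace IsPointDerivation

variable {χ ψ : RadSqAlg K V A s t →ₐ[K] K} {d : Module.Dual K (RadSqAlg K V A s t)}

theorem smul_eq (hd : IsPointDerivation χ ψ d) (r : RadSqAlg K V A s t) :
    r • d = d r • χ.toLinearMap + ψ r • d := by
  ext x
  simp [hd x r, mul_comm]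

theorem op_smul_eq (hd : IsPointDerivation χ ψ d) (r : RadSqAlg K V A s t) :
    op r • d = χ r • d + d r • ψ.toLinearMap := by
  ext x
  simp [hd r x]

end IsPointDerivation

end DualAction

namespace TrivExt

open TrivSqZeroExt

variable {K V A : Type} [Field K] [Fintype V] [DecidableEq V] {s t : A → V}

theorem character_fst_eq_zero_of_mem_jacobson {x : TrivExt K V A s t}
    (hx : x ∈ (⊥ : Ideal (TrivExt K V A s t)).jacobson) (v : V) :
    RadSqAlg.character K s t v x.fst = 0 := by
  let χ : TrivExt K V A s t →ₐ[K] K := (RadSqAlg.character K s t v).comp (fstHom K _ _)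
  exact algHom_apply_eq_zero_of_mem_jacobson χ hx

theorem mul_mul_eq_zero [Finite A] {x y z : TrivExt K V A s t}
    (hx : ∀ v, RadSqAlg.character K s t v x.fst = 0)
    (hy : ∀ v, RadSqAlg.character K s t v y.fst = 0)
    (hz : ∀ v, RadSqAlg.character K s t v z.fst = 0) : x * y * z = 0 := by
  have hxy : x.fst * y.fst = 0 := RadSqAlg.mul_eq_zero_of_character hx hy
  refine TrivSqZeroExt.ext (by simp [hxy]) (LinearMap.ext fun w => ?_)
  have hzx : z.fst * w * x.fst = 0 := RadSqAlg.mul_eq_zero_of_character (by simp [hz]) hx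
  have hyz : y.fst * (z.fst * w) = 0 := RadSqAlg.mul_eq_zero_of_character hy (by simp [hz])
  simp [hxy, hzx, hyz]

/-- The functional `(a, f) ↦ f(z)` on `A ⋉ D(A)`; for `z = 1` it is the symmetrizing form. -/
def evalSnd (z : RadSqAlg K V A s t) : TrivExt K V A s t →ₗ[K] K where
  toFun x := x.snd z
  map_add' _ _ := rfl
  map_smul' _ _ := rfl

@[simp]
theorem evalSnd_apply (z : RadSqAlg K V A s t) (x : TrivExt K V A s t) :
    evalSnd z x = x.snd z :=
  rfl

section SymmetrizingForm

theorem evalSnd_one_mul (x y : TrivExt K V A s t) :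
    evalSnd 1 (x * y) = y.snd x.fst + x.snd y.fst := by
  simp

theorem evalSnd_one_mul_comm (x y : TrivExt K V A s t) :
    evalSnd 1 (x * y) = evalSnd 1 (y * x) := by
  rw [evalSnd_one_mul, evalSnd_one_mul, add_comm]

theorem eq_zero_of_evalSnd_one_mul {x : TrivExt K V A s t} (h : ∀ y, evalSnd 1 (y * x) = 0) :
    x = 0 := by
  have : Module.Free K (RadSqAlg K V A s t) := Module.Free.of_divisionRing K (RadSqAlg K V A s t)
  refine TrivSqZeroExt.ext ?_ (LinearMap.ext fun r => ?_)
  · refine (Module.forall_dual_apply_eq_zero_iff K x.fst).1 fun f => ?_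
    simpa [evalSnd_one_mul] using! h (inr f)
  · simpa [evalSnd_one_mul] using! h (inl r)

theorem leftIdeal_eq_bot_of_evalSnd_one {L : Ideal (TrivExt K V A s t)}
    (hL : ∀ x ∈ L, evalSnd 1 x = 0) : L = ⊥ :=
  (Submodule.eq_bot_iff L).2 fun _ hx =>
    eq_zero_of_evalSnd_one_mul fun y => hL _ (L.mul_mem_left y hx)

theorem rightIdeal_eq_bot_of_evalSnd_one
    {R : Submodule (TrivExt K V A s t)ᵐᵒᵖ (TrivExt K V A s t)}
    (hR : ∀ x ∈ R, evalSnd 1 x = 0) : R = ⊥ :=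
  (Submodule.eq_bot_iff R).2 fun x hx => eq_zero_of_evalSnd_one_mul fun y => by
    rw [evalSnd_one_mul_comm]
    exact hR _ (R.smul_mem (MulOpposite.op y) hx)

end SymmetrizingForm

theorem isPointDerivation_evalSnd {χ ψ : RadSqAlg K V A s t →ₐ[K] K} {z : RadSqAlg K V A s t}
    (hχ : ∀ x, z * x = χ x • z) (hψ : ∀ x, x * z = ψ x • z) :
    IsPointDerivation (χ.comp (fstHom K _ _)) (ψ.comp (fstHom K _ _)) (evalSnd z) := fun x y => by
  simp [hχ, hψ, mul_comm]

end TrivExt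

theorem conditionM_of_involutive {K V A : Type} [Field K] [Fintype V] [DecidableEq V]
    {s t : A → V} {I : TwoSidedIdeal (PathAlg K V A s t)} {r : A → A} (hr : r.Involutive)
    (h : ∀ a b, arrow K V A s t a * arrow K V A s t b ∉ I → b = r a) :
    ConditionM K V A s t I := fun a =>
  ⟨fun b b' hb hb' => (h a b hb).trans (h a b' hb').symm,
    fun c c' hc hc' => hr.injective ((h c a hc).symm.trans (h c' a hc'))⟩

theorem isSpecialMultiserialAlgebra_of_surjective {K V A : Type} [Field K] [Fintype V]
    [DecidableEq V] [Finite A] {s t : A → V} {B : Type} [Ring B] [Algebra K B]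
    {f : PathAlg K V A s t →ₐ[K] B} (hf : Function.Surjective f)
    (hadm : Admissible K V A s t (TwoSidedIdeal.ker f))
    (hM : ConditionM K V A s t (TwoSidedIdeal.ker f)) : IsSpecialMultiserialAlgebra K B :=
  ⟨V, A, _, _, Fintype.ofFinite A, s, t, TwoSidedIdeal.ker f, hadm, hM, ⟨ringQuotKerEquiv f hf⟩⟩

variable {V A : Type} (s t : A → V) in
/-- The arrows of the quiver of the trivial extension of `KQ/J²`: those of `Q`, a reversed copy of
each of them, and a loop at each isolated vertex. -/
inductive ExtArrow
  | orig (a : A)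
  | dual (a : A)
  | loop (v : V) (hv : IsIsolated s t v)

namespace ExtArrow

section Quiver

variable {V A : Type} {s t : A → V}

instance [Finite V] [Finite A] : Finite (ExtArrow s t) :=
  Finite.of_surjective
    (Sum.elim orig (Sum.elim dual fun v : {v // IsIsolated s t v} => loop v v.2)) fun
    | orig a => ⟨.inl a, rfl⟩
    | dual a => ⟨.inr (.inl a), rfl⟩
    | loop v hv => ⟨.inr (.inr ⟨v, hv⟩), rfl⟩

/-- The source map of the quiver of the trivial extension. -/
def src : ExtArrow s t → V
  | orig a => s a
  | dual a => t a
  | loop v _ => v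

/-- The target map of the quiver of the trivial extension. -/
def tgt : ExtArrow s t → V
  | orig a => t a
  | dual a => s a
  | loop v _ => v

/-- The involution of the arrows of the trivial extension that exchanges an arrow of `Q` with its
reversed copy and fixes the loops. -/
def reverse : ExtArrow s t → ExtArrow s t
  | orig a => dual a
  | dual a => orig a
  | loop v hv => loop v hv

theorem reverse_involutive : (reverse : ExtArrow s t → ExtArrow s t).Involutive := fun
  | orig _ => rfl
  | dual _ => rfl
  | loop _ _ => rfl

end Quiver

section Presentation

open TrivSqZeroExt

variable {K V A : Type} [Field K] [Fintype V] [DecidableEq V] {s t : A → V}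

variable (K) in
/-- The element of the trivial extension that presents an arrow of its quiver: the reversed copy
of `a` is the coefficient functional of `a`, and the loop at `v` is the character at `v`. -/
noncomputable def toTrivExt : ExtArrow s t → TrivExt K V A s t
  | orig a => inl (RadSqAlg.arrow K s t a)
  | dual a => inr (RadSqAlg.arrowCoeff K s t a)
  | loop v _ => inr (RadSqAlg.character K s t v).toLinearMap

theorem isPathFamily_toTrivExt :
    IsPathFamily (src (s := s) (t := t)) tgt (fun v => inl (RadSqAlg.vtx K s t v))
      (toTrivExt K) where
  toCompleteOrthogonalIdempotents :=
    RadSqAlg.isPathFamily.toCompleteOrthogonalIdempotents.map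
      (inlHom (RadSqAlg K V A s t) (Module.Dual K (RadSqAlg K V A s t)))
  source_mul
    | orig a => by simp [toTrivExt, src, ← inl_mul]
    | dual a => by
      simp [toTrivExt, src, inl_mul_inr, (RadSqAlg.isPointDerivation_arrowCoeff a).smul_eq]
    | loop v _ => by simp [toTrivExt, src, inl_mul_inr, RadSqAlg.smul_algHom]
  mul_target
    | orig a => by simp [toTrivExt, tgt, ← inl_mul]
    | dual a => by
      simp [toTrivExt, tgt, inr_mul_inl, (RadSqAlg.isPointDerivation_arrowCoeff a).op_smul_eq]
    | loop v _ => by simp [toTrivExt, tgt, inr_mul_inl, RadSqAlg.op_smul_algHom]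

theorem orig_mul_dual [DecidableEq A] (a b : A) :
    toTrivExt K (orig a : ExtArrow s t) * toTrivExt K (dual b) =
      if a = b then inr (RadSqAlg.character K s t (s b)).toLinearMap else 0 := by
  split_ifs <;>
    simp [toTrivExt, inl_mul_inr, (RadSqAlg.isPointDerivation_arrowCoeff _).smul_eq, *]

theorem dual_mul_orig [DecidableEq A] (a b : A) :
    toTrivExt K (dual a : ExtArrow s t) * toTrivExt K (orig b) =
      if b = a then inr (RadSqAlg.character K s t (t a)).toLinearMap else 0 := by
  split_ifs <;>
    simp [toTrivExt, inr_mul_inl, (RadSqAlg.isPointDerivation_arrowCoeff _).op_smul_eq, *]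

theorem toTrivExt_mul_eq_zero {α β : ExtArrow s t} (h : β ≠ α.reverse) :
    toTrivExt K α * toTrivExt K β = 0 := by
  classical
  match α, β with
  | orig a, orig b => simp [toTrivExt, ← inl_mul]
  | orig a, dual b => exact (orig_mul_dual a b).trans (if_neg fun hab => h (by rw [hab, reverse]))
  | dual a, orig b => exact (dual_mul_orig a b).trans (if_neg fun hab => h (by rw [hab, reverse]))
  | orig a, loop v _ => simp [toTrivExt, inl_mul_inr, RadSqAlg.smul_algHom]
  | loop v _, orig a => simp [toTrivExt, inr_mul_inl, RadSqAlg.op_smul_algHom]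
  | dual _, dual _ | dual _, loop _ _ | loop _ _, dual _ | loop _ _, loop _ _ =>
    exact inr_mul_inr _ _ _

theorem character_fst_toTrivExt (v : V) (α : ExtArrow s t) :
    RadSqAlg.character K s t v (toTrivExt K α).fst = 0 := by
  cases α <;> simp [toTrivExt]

variable (K s t) in
/-- The presentation of the trivial extension of `KQ/J²` by its quiver. -/
noncomputable def presentation :
    PathAlg K V (ExtArrow s t) src tgt →ₐ[K] TrivExt K V A s t :=
  isPathFamily_toTrivExt.lift

@[simp]
theorem presentation_vtx (v : V) :
    presentation K s t (vtx K V _ src tgt v) = inl (RadSqAlg.vtx K s t v) :=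
  IsPathFamily.lift_vtx ..

@[simp]
theorem presentation_arrow (α : ExtArrow s t) :
    presentation K s t (arrow K V _ src tgt α) = toTrivExt K α :=
  IsPathFamily.lift_arrow ..

section Surjectivity

theorem inl_vtx_mem_range (v : V) :
    inl (RadSqAlg.vtx K s t v) ∈ (presentation K s t).range :=
  ⟨_, presentation_vtx v⟩

theorem toTrivExt_mem_range (α : ExtArrow s t) :
    toTrivExt K α ∈ (presentation K s t).range :=
  ⟨_, presentation_arrow α⟩

theorem inr_character_mem_range (v : V) :
    inr (RadSqAlg.character K s t v).toLinearMap ∈ (presentation K s t).range := by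
  classical
  by_cases hv : IsIsolated s t v
  · exact toTrivExt_mem_range (loop v hv)
  · obtain ⟨a, ha⟩ : ∃ a, s a = v ∨ t a = v := by
      simpa [IsIsolated, ← not_or] using hv
    obtain rfl | rfl := ha
    · simpa [orig_mul_dual] using
        mul_mem (toTrivExt_mem_range (orig a)) (toTrivExt_mem_range (dual a))
    · simpa [dual_mul_orig] using
        mul_mem (toTrivExt_mem_range (dual a)) (toTrivExt_mem_range (orig a))

theorem inl_mem_range [Finite A] (x : RadSqAlg K V A s t) :
    inl x ∈ (presentation K s t).range := by
  cases nonempty_fintype A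
  rw [RadSqAlg.eq_sum_coeffs x, inl_add, inl_sum, inl_sum]
  refine add_mem (sum_mem fun v _ => ?_) (sum_mem fun a _ => ?_) <;> rw [inl_smul]
  · exact Subalgebra.smul_mem _ (inl_vtx_mem_range v) _
  · exact Subalgebra.smul_mem _ (toTrivExt_mem_range (orig a)) _

theorem inr_mem_range [Finite A] (f : Module.Dual K (RadSqAlg K V A s t)) :
    inr f ∈ (presentation K s t).range := by
  cases nonempty_fintype A
  rw [RadSqAlg.dual_eq_sum_coeffs f, inr_add, inr_sum, inr_sum]
  refine add_mem (sum_mem fun v _ => ?_) (sum_mem fun a _ => ?_) <;> rw [inr_smul]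
  · exact Subalgebra.smul_mem _ (inr_character_mem_range v) _
  · exact Subalgebra.smul_mem _ (toTrivExt_mem_range (dual a)) _

theorem presentation_surjective [Finite A] : Function.Surjective (presentation K s t) := fun x => by
  rw [← inl_fst_add_inr_snd_eq x]
  exact add_mem (inl_mem_range x.fst) (inr_mem_range x.snd)

end Surjectivity

section Kernel

variable (K) in
/-- The functional on the trivial extension dual to an arrow of its quiver. -/
noncomputable def coeff : ExtArrow s t → TrivExt K V A s t →ₗ[K] K
  | orig a => RadSqAlg.arrowCoeff K s t a ∘ₗ (fstHom K _ _).toLinearMap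
  | dual a => TrivExt.evalSnd (RadSqAlg.arrow K s t a)
  | loop v _ => TrivExt.evalSnd (RadSqAlg.vtx K s t v)

theorem coeff_vtx (α : ExtArrow s t) (v : V) : coeff K α (inl (RadSqAlg.vtx K s t v)) = 0 := by
  cases α <;> simp [coeff]

theorem coeff_toTrivExt [DecidableEq (ExtArrow s t)] (α β : ExtArrow s t) :
    coeff K α (toTrivExt K β) = if β = α then 1 else 0 := by
  classical
  cases α <;> cases β <;> simp [coeff, toTrivExt, eq_comm]

theorem isPointDerivation_coeff : ∀ α : ExtArrow s t,
    IsPointDerivation ((RadSqAlg.character K s t α.src).comp (fstHom K _ _))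
      ((RadSqAlg.character K s t α.tgt).comp (fstHom K _ _)) (coeff K α)
  | orig a => (RadSqAlg.isPointDerivation_arrowCoeff a).comp _
  | dual a => TrivExt.isPointDerivation_evalSnd (RadSqAlg.arrow_mul a) (RadSqAlg.mul_arrow · a)
  | loop _ hv => TrivExt.isPointDerivation_evalSnd hv.vtx_mul hv.mul_vtx

variable (K s t) in
/-- The projection of the trivial extension onto the radical square zero algebra of its quiver. -/
noncomputable def toRadSqAlg [Fintype (ExtArrow s t)] :
    TrivExt K V A s t →ₐ[K] RadSqAlg K V (ExtArrow s t) src tgt :=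
  RadSqAlg.ofCoeffs (fun v => (RadSqAlg.character K s t v).comp (fstHom K _ _)) (coeff K)
    isPointDerivation_coeff

theorem toRadSqAlg_comp_presentation [Fintype (ExtArrow s t)] :
    (toRadSqAlg K s t).comp (presentation K s t) = RadSqAlg.mk K src tgt := by
  classical
  refine PathAlg.algHom_ext (fun v => ?_) fun α => ?_
  · simp [toRadSqAlg, RadSqAlg.ofCoeffs_apply, coeff_vtx]
  · simp [toRadSqAlg, RadSqAlg.ofCoeffs_apply, character_fst_toTrivExt, coeff_toTrivExt]

theorem ker_presentation_le_JSqIdeal [Finite A] :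
    TwoSidedIdeal.ker (presentation K s t) ≤ JSqIdeal K V (ExtArrow s t) src tgt := fun x hx => by
  cases nonempty_fintype (ExtArrow s t)
  refine RadSqAlg.mem_JSqIdeal_of_mk_eq_zero ?_
  rw [← toRadSqAlg_comp_presentation, AlgHom.comp_apply, (TwoSidedIdeal.mem_ker _).1 hx, map_zero]

end Kernel

theorem admissible_ker_presentation [Finite A] :
    Admissible K V (ExtArrow s t) src tgt (TwoSidedIdeal.ker (presentation K s t)) := by
  refine ⟨3, by norm_num, fun l hl => ?_, ker_presentation_le_JSqIdeal⟩
  obtain ⟨α, β, γ, rfl⟩ := List.length_eq_three.1 hl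
  have h := TrivExt.mul_mul_eq_zero (character_fst_toTrivExt (K := K) · α)
    (character_fst_toTrivExt · β) (character_fst_toTrivExt · γ)
  simpa [TwoSidedIdeal.mem_ker, pathElem, ← mul_assoc] using h

theorem conditionM_ker_presentation :
    ConditionM K V (ExtArrow s t) src tgt (TwoSidedIdeal.ker (presentation K s t)) := by
  refine conditionM_of_involutive reverse_involutive fun α β => ?_
  rw [TwoSidedIdeal.mem_ker, map_mul, presentation_arrow, presentation_arrow]
  exact not_imp_comm.1 toTrivExt_mul_eq_zero

end Presentation

end ExtArrow

theorem TrivExt.isSpecialMultiserialAlgebra {K V A : Type} [Field K] [Fintype V] [DecidableEq V]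
    [Finite A] {s t : A → V} : IsSpecialMultiserialAlgebra K (TrivExt K V A s t) :=
  isSpecialMultiserialAlgebra_of_surjective ExtArrow.presentation_surjective
    ExtArrow.admissible_ker_presentation ExtArrow.conditionM_ker_presentation

/-- If `A = KQ/J²` is a radical square zero algebra, then the
trivial extension `A ⋉ D(A)` is a symmetric special multiserial algebra whose
(Jacobson) radical cube is zero, and `A` is a quotient of `A ⋉ D(A)`. -/
theorem trivial_extension_symmetric_special_multiserial
    (K V A : Type) [Field K] [Fintype V] [DecidableEq V] [Fintype A] (s t : A → V) :
    (∃ g : TrivExt K V A s t →ₗ[K] K,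
      (∀ x y : TrivExt K V A s t, g (x * y) = g (y * x)) ∧
      (∀ L : Ideal (TrivExt K V A s t), (∀ x ∈ L, g x = 0) → L = ⊥) ∧
      (∀ R : Submodule (TrivExt K V A s t)ᵐᵒᵖ (TrivExt K V A s t),
        (∀ x ∈ R, g x = 0) → R = ⊥)) ∧
    IsSpecialMultiserialAlgebra K (TrivExt K V A s t) ∧
    (∀ x y z : TrivExt K V A s t,
      x ∈ (⊥ : Ideal (TrivExt K V A s t)).jacobson →
      y ∈ (⊥ : Ideal (TrivExt K V A s t)).jacobson →
      z ∈ (⊥ : Ideal (TrivExt K V A s t)).jacobson → x * y * z = 0) ∧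
    (∃ φ : TrivExt K V A s t →ₐ[K] RadSqAlg K V A s t, Function.Surjective φ) := by
  refine ⟨⟨TrivExt.evalSnd 1, TrivExt.evalSnd_one_mul_comm,
      fun _ => TrivExt.leftIdeal_eq_bot_of_evalSnd_one,
      fun _ => TrivExt.rightIdeal_eq_bot_of_evalSnd_one⟩,
    TrivExt.isSpecialMultiserialAlgebra, fun x y z hx hy hz => ?_, ?_⟩
  · exact TrivExt.mul_mul_eq_zero (TrivExt.character_fst_eq_zero_of_mem_jacobson hx)
      (TrivExt.character_fst_eq_zero_of_mem_jacobson hy)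
      (TrivExt.character_fst_eq_zero_of_mem_jacobson hz)
  · exact ⟨TrivSqZeroExt.fstHom K _ _, TrivSqZeroExt.fst_surjective⟩
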